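/- Let H be a Hopf algebra over K and (V, μ) an algebra in the category of left H-Yetter-Drinfeld modules. Then the map P_L : V # H → V # H defined by P_L(v # h) = ∑ S(v₍₋₁₎h₍₂₎)·v₍₀₎ # S(v₍₋₂₎h₍₁₎)h₍₃₎ (where ∑ v₍₋₂₎ ⊗ v₍₋₁₎ ⊗ v₍₀₎ denotes the iterated coaction and ∑ h₍₁₎ ⊗ h₍₂₎ ⊗ h₍₃₎ the iterated comultiplication) is an idempotent Rota-Baxter operator of weight -1 on the smash product algebra V # H. -/

import Mathlib

/-!
STATEMENT 14: For an algebra `(V, μ)` in the category of left `H`-Yetter-Drinfeld modules,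
the map `P_L(v # h) = ∑ S(v₍₋₁₎h₍₂₎)·v₍₀₎ # S(v₍₋₂₎h₍₁₎)h₍₃₎` is an idempotent
Rota-Baxter operator of weight `-1` on the smash product algebra `V # H`.
Here `P_L` is built Sweedler-free from the iterated coaction
`v ↦ ∑ v₍₋₂₎ ⊗ v₍₋₁₎ ⊗ v₍₀₎` and the iterated comultiplication
`h ↦ ∑ h₍₁₎ ⊗ h₍₂₎ ⊗ h₍₃₎`.
-/

open TensorProduct Coalgebra HopfAlgebra LinearMap

/-- The smash product multiplication on `V ⊗ H` associated to a left `H`-action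
`act : H ⊗ V →ₗ V`:  `(v # h)(v' # h') = ∑ v(h₍₁₎·v') # h₍₂₎h'`. -/
noncomputable def smashMul (K : Type*) [Field K]
    (H : Type*) [Ring H] [HopfAlgebra K H]
    (V : Type*) [NonUnitalRing V] [Module K V]
    [SMulCommClass K V V] [IsScalarTower K V V]
    (act : H ⊗[K] V →ₗ[K] V) :
    (V ⊗[K] H) ⊗[K] (V ⊗[K] H) →ₗ[K] V ⊗[K] H :=
  (LinearMap.rTensor H (LinearMap.mul' K V)) ∘ₗ
  (TensorProduct.assoc K V V H).symm.toLinearMap ∘ₗ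
  (LinearMap.lTensor V (TensorProduct.map act (LinearMap.mul' K H))) ∘ₗ
  (LinearMap.lTensor V (TensorProduct.tensorTensorTensorComm K H H V H).toLinearMap) ∘ₗ
  (TensorProduct.assoc K V (H ⊗[K] H) (V ⊗[K] H)).toLinearMap ∘ₗ
  (LinearMap.rTensor (V ⊗[K] H) (LinearMap.lTensor V (Coalgebra.comul (R := K) (A := H))))

set_option linter.unusedSectionVars false
set_option linter.unusedSimpArgs false

namespace SmashRB

section Antipode
variable {K H : Type*} [Field K] [Ring H] [HopfAlgebra K H]

/-- `∑ S(h₂)h₃ ⊗ S(h₁)`-type cancellation. -/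
lemma swap_aux (p : H) :
    (LinearMap.mul' K (H ⊗[K] H)) (TensorProduct.map
      ((TensorProduct.map (antipode K) (antipode K)) ∘ₗ
        (TensorProduct.comm K H H).toLinearMap ∘ₗ comul)
      ((TensorProduct.mk K H H).flip 1) (comul (R := K) p)) = 1 ⊗ₜ[K] antipode K p := by
  have h1 : ∀ t : H ⊗[K] H, (LinearMap.mul' K (H ⊗[K] H)) (TensorProduct.map
      ((TensorProduct.map (antipode K) (antipode K)) ∘ₗ
        (TensorProduct.comm K H H).toLinearMap ∘ₗ comul)
      ((TensorProduct.mk K H H).flip 1) t) =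
      (TensorProduct.map (LinearMap.mul' K H ∘ₗ (antipode K).rTensor H) (antipode K))
        (TensorProduct.comm K H (H ⊗[K] H)
          (TensorProduct.assoc K H H H (comul.rTensor H t))) := by
    intro t
    induction t with
    | zero => simp
    | add x y hx hy => simp only [map_add, hx, hy]
    | tmul a b =>
      simp only [TensorProduct.map_tmul, LinearMap.comp_apply, rTensor_tmul]
      generalize (comul (R := K) a) = s
      induction s with
      | zero => simp
      | add x y hx hy => simp only [map_add, add_tmul, hx, hy]
      | tmul c d => simp
  rw [h1, Coalgebra.coassoc_apply]
  have h2 : ∀ t : H ⊗[K] H, (TensorProduct.map (LinearMap.mul' K H ∘ₗ (antipode K).rTensor H)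
      (antipode K)) (TensorProduct.comm K H (H ⊗[K] H) (comul.lTensor H t)) =
      1 ⊗ₜ[K] antipode K (TensorProduct.rid K H ((counit (R := K)).lTensor H t)) := by
    intro t
    induction t with
    | zero => simp
    | add x y hx hy => simp only [map_add, tmul_add, hx, hy]
    | tmul a b => simp [Algebra.algebraMap_eq_smul_one, TensorProduct.smul_tmul]
  rw [h2]; simp

lemma comul_antipode (h : H) : comul (R := K) (antipode K h) =
    TensorProduct.map (antipode K) (antipode K) (TensorProduct.comm K H H (comul h)) := by
  have key : WithConv.toConv ((TensorProduct.map (antipode K) (antipode K)) ∘ₗ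
        (TensorProduct.comm K H H).toLinearMap ∘ₗ comul (R := K) (A := H)) =
      WithConv.toConv (comul ∘ₗ antipode K) := by
    refine left_inv_eq_right_inv (a := WithConv.toConv comul) ?_ LinearMap.comul_right_inv
    ext p
    simp only [LinearMap.convMul_apply, LinearMap.convOne_apply]
    -- `G(p₁) Δ(p₂) = G(p₁)(p₂ ⊗ 1)(1 ⊗ p₃)`
    have h1 : ∀ t : H ⊗[K] H, (LinearMap.mul' K (H ⊗[K] H)) (TensorProduct.map
      ((TensorProduct.map (antipode K) (antipode K)) ∘ₗ
        (TensorProduct.comm K H H).toLinearMap ∘ₗ comul) comul t) =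
      (LinearMap.mul' K (H ⊗[K] H)) (TensorProduct.map
        (LinearMap.mul' K (H ⊗[K] H) ∘ₗ (TensorProduct.map
      ((TensorProduct.map (antipode K) (antipode K)) ∘ₗ
        (TensorProduct.comm K H H).toLinearMap ∘ₗ comul)
      ((TensorProduct.mk K H H).flip 1))) (TensorProduct.mk K H H 1)
       ((TensorProduct.assoc K H H H).symm (comul.lTensor H t))) := by
      intro t
      induction t with
      | zero => simp
      | add x y hx hy => simp only [map_add, hx, hy]
      | tmul a b =>
        simp only [TensorProduct.map_tmul, lTensor_tmul]
        generalize (comul (R := K) b) = s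
        induction s with
        | zero => simp
        | add x y hx hy => simp only [map_add, tmul_add, hx, hy]
        | tmul c d => simp [mul_assoc]
    have h2 : ∀ t : H ⊗[K] H, (LinearMap.mul' K (H ⊗[K] H)) (TensorProduct.map
        (LinearMap.mul' K (H ⊗[K] H) ∘ₗ (TensorProduct.map
      ((TensorProduct.map (antipode K) (antipode K)) ∘ₗ
        (TensorProduct.comm K H H).toLinearMap ∘ₗ comul)
      ((TensorProduct.mk K H H).flip 1))) (TensorProduct.mk K H H 1)
       (comul.rTensor H t)) = 1 ⊗ₜ[K] (LinearMap.mul' K H ((antipode K).rTensor H t)) := by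
      intro t
      induction t with
      | zero => simp
      | add x y hx hy => simp only [map_add, tmul_add, hx, hy]
      | tmul a b =>
        simp only [TensorProduct.map_tmul, rTensor_tmul, LinearMap.comp_apply (f := LinearMap.mul' K _)]
        rw [swap_aux]; simp
    refine (h1 _).trans ?_
    rw [← Coalgebra.coassoc_apply, LinearEquiv.symm_apply_apply, h2]
    simp [Algebra.algebraMap_eq_smul_one, Algebra.TensorProduct.one_def]
  have := congrArg WithConv.ofConv key
  exact (LinearMap.congr_fun this h).symm

lemma comul_antipode_mul (p : H) :
    (LinearMap.mul' K (H ⊗[K] H)) (TensorProduct.map (comul ∘ₗ antipode K)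
      ((TensorProduct.mk K H H).flip 1) (comul (R := K) p)) = 1 ⊗ₜ[K] antipode K p := by
  rw [← swap_aux]
  congr 3
  ext h
  simp [comul_antipode]

end Antipode

section Abstract
variable {K H A : Type*} [Field K] [Ring H] [HopfAlgebra K H] [AddCommGroup A] [Module K A]
  (L : H →ₗ[K] A →ₗ[K] A) (δ : A →ₗ[K] H ⊗[K] A) (m : A →ₗ[K] A →ₗ[K] A)

/-- `x ↦ S(x₋₁) x₀`. -/
noncomputable def PA : A →ₗ[K] A := TensorProduct.lift (L ∘ₗ antipode K) ∘ₗ δ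

variable (L_mul : ∀ g h x, L g (L h x) = L (g * h) x)
  (L_one : ∀ x, L 1 x = x)
  (L_m : ∀ h x y, L h (m x y) = m (L h x) y)
  (δ_L : ∀ h x, δ (L h x) = TensorProduct.map₂ (LinearMap.mul K H) L (comul h) (δ x))
  (δ_m : ∀ x y, δ (m x y) = TensorProduct.map₂ (LinearMap.mul K H) m (δ x) (δ y))
  (δ_coassoc : ∀ x, δ.lTensor H (δ x) = TensorProduct.assoc K H H A (comul.rTensor A (δ x)))
  (δ_counit : ∀ x, TensorProduct.lid K A ((counit (R := K)).rTensor A (δ x)) = x)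

include L_mul L_one δ_L in
lemma PA_L (h : H) (x : A) : PA L δ (L h x) = counit (R := K) h • PA L δ x := by
  simp only [PA, LinearMap.comp_apply, δ_L]
  generalize δ x = s
  induction s with
  | zero => simp
  | add x y hx hy => simp only [map_add, smul_add, hx, hy]
  | tmul p a =>
    have : ∀ t : H ⊗[K] H, TensorProduct.lift (L ∘ₗ antipode K)
        (TensorProduct.map₂ (LinearMap.mul K H) L t (p ⊗ₜ a)) =
        L (antipode K p) (L (LinearMap.mul' K H ((antipode K).rTensor H t)) a) := by
      intro t
      induction t with
      | zero => simp
      | add x y hx hy => simp only [map_add, LinearMap.add_apply, hx, hy]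
      | tmul c d => simp [antipode_mul_antidistrib, L_mul, mul_assoc]
    rw [this]
    simp [Algebra.algebraMap_eq_smul_one, L_one]

include L_mul L_one δ_L δ_counit in
lemma PA_PA (x : A) : PA L δ (PA L δ x) = PA L δ x := by
  have : ∀ s : H ⊗[K] A, PA L δ (TensorProduct.lift (L ∘ₗ antipode K) s) =
      PA L δ (TensorProduct.lid K A ((counit (R := K)).rTensor A s)) := by
    intro s
    induction s with
    | zero => simp
    | add x y hx hy => simp only [map_add, hx, hy]
    | tmul p a => simp [PA_L L δ L_mul L_one δ_L]
  conv_lhs => rw [PA, LinearMap.comp_apply, LinearMap.comp_apply]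
  have h := this (δ x)
  rw [δ_counit] at h
  exact h

include L_mul L_m δ_m in
lemma PA_m (x y : A) : PA L δ (m x y) =
    TensorProduct.lift (L ∘ₗ antipode K) ((m (PA L δ x)).lTensor H (δ y)) := by
  simp only [PA, LinearMap.comp_apply, δ_m]
  generalize δ x = s
  generalize δ y = t
  induction s with
  | zero => simp
  | add x y hx hy => simp only [map_add, LinearMap.add_apply, lTensor_add, hx, hy]
  | tmul p a =>
    induction t with
    | zero => simp
    | add x y hx hy => simp only [map_add, hx, hy]
    | tmul q b => simp [antipode_mul_antidistrib, ← L_mul, L_m]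

include δ_L δ_coassoc in
lemma δ_PA (x : A) : δ (PA L δ x) = 1 ⊗ₜ PA L δ x := by
  let Θ : H ⊗[K] (H ⊗[K] A) →ₗ[K] H ⊗[K] A := TensorProduct.lift
    (TensorProduct.map₂ (LinearMap.mul K H) L ∘ₗ comul ∘ₗ antipode K)
  have h1 : ∀ s : H ⊗[K] A, δ (TensorProduct.lift (L ∘ₗ antipode K) s) = Θ (δ.lTensor H s) := by
    intro s
    induction s with
    | zero => simp
    | add x y hx hy => simp only [map_add, hx, hy]
    | tmul p a => simp [Θ, δ_L]
  have h2 : ∀ s : H ⊗[K] A, Θ (TensorProduct.assoc K H H A (comul.rTensor A s)) =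
      1 ⊗ₜ TensorProduct.lift (L ∘ₗ antipode K) s := by
    intro s
    induction s with
    | zero => simp
    | add x y hx hy => simp only [map_add, tmul_add, hx, hy]
    | tmul p a =>
      have h3 : ∀ t : H ⊗[K] H, Θ (TensorProduct.assoc K H H A (t ⊗ₜ a)) =
          (L.flip a).lTensor H ((LinearMap.mul' K (H ⊗[K] H)) (TensorProduct.map
            (comul ∘ₗ antipode K) ((TensorProduct.mk K H H).flip 1) t)) := by
        intro t
        induction t with
        | zero => simp
        | add x y hx hy => simp only [map_add, add_tmul, hx, hy]
        | tmul c d =>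
          simp only [Θ, TensorProduct.assoc_tmul, TensorProduct.lift.tmul, LinearMap.comp_apply,
            TensorProduct.map_tmul]
          generalize (comul (R := K) (antipode K c)) = u
          induction u with
          | zero => simp
          | add x y hx hy => simp only [map_add, add_tmul, LinearMap.add_apply, hx, hy]
          | tmul e f => simp
      rw [rTensor_tmul, h3, comul_antipode_mul]
      simp
  rw [PA, LinearMap.comp_apply, h1, δ_coassoc, h2]

include L_mul L_one L_m δ_L δ_m δ_coassoc δ_counit in
lemma PA_RB (x y : A) : m (PA L δ x) (PA L δ y) =
    PA L δ (m x (PA L δ y)) + PA L δ (m (PA L δ x) y) + (-1 : K) • PA L δ (m x y) := by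
  rw [PA_m L δ m L_mul L_m δ_m x (PA L δ y), PA_m L δ m L_mul L_m δ_m (PA L δ x) y,
    PA_m L δ m L_mul L_m δ_m x y, PA_PA L δ L_mul L_one δ_L δ_counit,
    δ_PA L δ δ_L δ_coassoc]
  simp [L_one]

end Abstract

section Concrete
variable {K H V : Type*} [Field K] [Ring H] [HopfAlgebra K H] [NonUnitalRing V] [Module K V]
    [SMulCommClass K V V] [IsScalarTower K V V]
    (act : H ⊗[K] V →ₗ[K] V) (ρ : V →ₗ[K] H ⊗[K] V)

/-- The diagonal left `H`-action on `V ⊗ H`. -/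
noncomputable def Lc : H →ₗ[K] (V ⊗[K] H) →ₗ[K] (V ⊗[K] H) :=
  TensorProduct.map₂ (TensorProduct.curry act) (LinearMap.mul K H) ∘ₗ comul

/-- The diagonal left `H`-coaction on `V ⊗ H`. -/
noncomputable def δc : V ⊗[K] H →ₗ[K] H ⊗[K] (V ⊗[K] H) :=
  TensorProduct.lift
    ((TensorProduct.map₂ (LinearMap.mul K H) (TensorProduct.mk K V H)).compl₁₂ ρ comul)

lemma Lc_apply (h : H) (x : V ⊗[K] H) :
    Lc act h x = TensorProduct.map₂ (TensorProduct.curry act) (LinearMap.mul K H) (comul h) x := rfl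

lemma δc_tmul (v : V) (k : H) : δc ρ (v ⊗ₜ k) =
    TensorProduct.map₂ (LinearMap.mul K H) (TensorProduct.mk K V H) (ρ v) (comul k) := by
  simp [δc]

lemma smash_tmul (v : V) (h : H) (y : V ⊗[K] H) :
    smashMul K H V act ((v ⊗ₜ h) ⊗ₜ y) = (LinearMap.mul K V v).rTensor H (Lc act h y) := by
  simp only [smashMul, LinearMap.comp_apply, rTensor_tmul, lTensor_tmul, Lc_apply]
  generalize (comul (R := K) h) = t
  induction t with
  | zero => simp
  | add x y hx hy => simp only [map_add, tmul_add, add_tmul, LinearMap.add_apply, hx, hy]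
  | tmul a b =>
    induction y with
    | zero => simp
    | add x y hx hy => simp only [map_add, tmul_add, hx, hy]
    | tmul w k => simp

variable (act_one : ∀ v : V, act ((1 : H) ⊗ₜ[K] v) = v)
    (act_mul : ∀ (h h' : H) (v : V),
      act (h ⊗ₜ[K] act (h' ⊗ₜ[K] v)) = act ((h * h') ⊗ₜ[K] v))
    (coassoc : ∀ v : V,
      (ρ.lTensor H) (ρ v) =
        (TensorProduct.assoc K H H V)
          (((Coalgebra.comul (R := K) (A := H)).rTensor V) (ρ v)))
    (counital : ∀ v : V,
      (TensorProduct.lid K V) (((Coalgebra.counit (R := K) (A := H)).rTensor V) (ρ v)) = v)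
    (yd : ∀ (h : H) (v : V),
      (TensorProduct.map (LinearMap.mul' K H) act)
        ((TensorProduct.tensorTensorTensorComm K H H H V)
          (Coalgebra.comul h ⊗ₜ[K] ρ v)) =
      (TensorProduct.map
          ((LinearMap.mul' K H) ∘ₗ (TensorProduct.comm K H H).toLinearMap) LinearMap.id)
        ((TensorProduct.assoc K H H V).symm
          ((LinearMap.lTensor H (ρ ∘ₗ act))
            ((TensorProduct.assoc K H H V)
              ((LinearMap.rTensor V (TensorProduct.comm K H H).toLinearMap)
                (Coalgebra.comul h ⊗ₜ[K] v))))))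
    (act_alg : ∀ (h : H) (v v' : V),
      act (h ⊗ₜ[K] (v * v')) =
        (LinearMap.mul' K V)
          ((TensorProduct.map act act)
            ((TensorProduct.tensorTensorTensorComm K H H V V)
              (Coalgebra.comul h ⊗ₜ[K] (v ⊗ₜ[K] v')))))
    (coact_alg : ∀ v v' : V,
      ρ (v * v') =
        (TensorProduct.map (LinearMap.mul' K H) (LinearMap.mul' K V))
          ((TensorProduct.tensorTensorTensorComm K H V H V) (ρ v ⊗ₜ[K] ρ v')))

include act_one in
lemma Lc_one (x : V ⊗[K] H) : Lc act 1 x = x := by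
  rw [Lc_apply, Bialgebra.comul_one, Algebra.TensorProduct.one_def]
  induction x with
  | zero => simp
  | add x y hx hy => simp only [map_add, hx, hy]
  | tmul v k => simp [act_one]

include act_mul in
lemma Lc_mul (g h : H) (x : V ⊗[K] H) : Lc act g (Lc act h x) = Lc act (g * h) x := by
  simp only [Lc_apply, Bialgebra.comul_mul]
  generalize (comul (R := K) g) = s
  generalize (comul (R := K) h) = t
  induction s with
  | zero => simp
  | add x y hx hy => simp only [map_add, add_mul, LinearMap.add_apply, hx, hy]
  | tmul a b =>
    induction t with
    | zero => simp
    | add x y hx hy => simp only [map_add, mul_add, LinearMap.add_apply, hx, hy]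
    | tmul c d =>
      induction x with
      | zero => simp
      | add x y hx hy => simp only [map_add, hx, hy]
      | tmul v k => simp [act_mul, mul_assoc]

/-- `(a ⊗ b) ↦ (a·v) * (b·z)`. -/
noncomputable def smashPair (v : V) (z : V ⊗[K] H) : H ⊗[K] H →ₗ[K] V ⊗[K] H :=
  TensorProduct.lift (LinearMap.compl₁₂ (LinearMap.rTensorHom H ∘ₗ LinearMap.mul K V ∘ₗ
    (TensorProduct.curry act).flip v) LinearMap.id ((Lc act).flip z))

lemma smashPair_tmul (v : V) (z : V ⊗[K] H) (a b : H) : smashPair act v z (a ⊗ₜ b) =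
    (LinearMap.mul K V (act (a ⊗ₜ v))).rTensor H (Lc act b z) := by
  simp [smashPair]

lemma smashPair_zero (v : V) : smashPair act v (0 : V ⊗[K] H) = 0 := by
  ext; simp [smashPair]

lemma smashPair_add (v : V) (x y : V ⊗[K] H) :
    smashPair act v (x + y) = smashPair act v x + smashPair act v y := by
  ext; simp [smashPair]

include act_alg act_mul in
lemma Lc_smash (h : H) (x y : V ⊗[K] H) :
    Lc act h (smashMul K H V act (x ⊗ₜ y)) = smashMul K H V act (Lc act h x ⊗ₜ y) := by
  induction x with
  | zero => simp
  | add x y hx hy => simp only [map_add, add_tmul, hx, hy]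
  | tmul v k =>
    rw [smash_tmul]
    have e1 : ∀ z : V ⊗[K] H, Lc act h ((LinearMap.mul K V v).rTensor H z) =
        smashPair act v z (comul h) := by
      intro z
      induction z with
      | zero => simp [smashPair_zero]
      | add x y hx hy => simp only [map_add, smashPair_add, LinearMap.add_apply, hx, hy]
      | tmul w l =>
        let Φ : H ⊗[K] (H ⊗[K] H) →ₗ[K] V ⊗[K] H :=
          (TensorProduct.map (LinearMap.mul' K V) ((LinearMap.mul K H).flip l)) ∘ₗ
          (TensorProduct.assoc K V V H).symm.toLinearMap ∘ₗ
          (TensorProduct.map ((TensorProduct.curry act).flip v)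
            (TensorProduct.map ((TensorProduct.curry act).flip w) LinearMap.id))
        have f1 : ∀ t : H ⊗[K] H, TensorProduct.map₂ (TensorProduct.curry act)
            (LinearMap.mul K H) t ((v * w) ⊗ₜ l) =
            Φ (TensorProduct.assoc K H H H (comul.rTensor H t)) := by
          intro t
          induction t with
          | zero => simp
          | add x y hx hy => simp only [map_add, LinearMap.add_apply, hx, hy]
          | tmul a b =>
            simp only [map₂_apply_tmul, TensorProduct.map_tmul, curry_apply, act_alg, rTensor_tmul]
            generalize (comul (R := K) a) = s
            induction s with
            | zero => simp
            | add x y hx hy => simp only [map_add, add_tmul, hx, hy]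
            | tmul c d => simp [Φ]
        have f2 : ∀ t : H ⊗[K] H, smashPair act v (w ⊗ₜ l) t = Φ (comul.lTensor H t) := by
          intro t
          induction t with
          | zero => simp
          | add x y hx hy => simp only [map_add, hx, hy]
          | tmul a b =>
            simp only [smashPair_tmul, Lc_apply, lTensor_tmul]
            generalize (comul (R := K) b) = s
            induction s with
            | zero => simp
            | add x y hx hy => simp only [map_add, tmul_add, LinearMap.add_apply, hx, hy]
            | tmul c d => simp [Φ]
        rw [f2, ← Coalgebra.coassoc_apply, ← f1, Lc_apply]
        simp
    have e2 : ∀ t : H ⊗[K] H, smashMul K H V act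
        (TensorProduct.map₂ (TensorProduct.curry act) (LinearMap.mul K H) t (v ⊗ₜ k) ⊗ₜ y) =
        smashPair act v (Lc act k y) t := by
      intro t
      induction t with
      | zero => simp
      | add x y hx hy => simp only [map_add, add_tmul, LinearMap.add_apply, hx, hy]
      | tmul a b =>
        simp [smashPair_tmul, smash_tmul, Lc_mul act act_mul]
    rw [e1, Lc_apply act h (v ⊗ₜ k), e2]

include yd in
/-- Reformulation of the Yetter-Drinfeld condition. -/
lemma yd' (h : H) (v : V) :
    TensorProduct.map₂ (LinearMap.mul K H) (TensorProduct.curry act) (comul h) (ρ v) = 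
    TensorProduct.lift ((LinearMap.rTensorHom V ∘ₗ (LinearMap.mul K H).flip).flip.compl₁₂
      (ρ ∘ₗ (TensorProduct.curry act).flip v) LinearMap.id) (comul h) := by
  refine Eq.trans ?_ ((yd h v).trans ?_)
  · generalize (comul (R := K) h) = t
    generalize ρ v = s
    induction t with
    | zero => simp
    | add x y hx hy => simp only [map_add, add_tmul, LinearMap.add_apply, hx, hy]
    | tmul a b =>
      induction s with
      | zero => simp
      | add x y hx hy => simp only [map_add, tmul_add, hx, hy]
      | tmul p w => simp
  · generalize (comul (R := K) h) = t
    induction t with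
    | zero => simp
    | add x y hx hy => simp only [map_add, add_tmul, hx, hy]
    | tmul a b =>
      simp only [rTensor_tmul, LinearEquiv.coe_coe, TensorProduct.comm_tmul,
        TensorProduct.assoc_tmul, lTensor_tmul, LinearMap.comp_apply, lift.tmul,
        LinearMap.compl₁₂_apply, LinearMap.flip_apply, curry_apply, LinearMap.id_apply]
      generalize ρ (act (a ⊗ₜ v)) = s
      induction s with
      | zero => simp
      | add x y hx hy => simp only [map_add, tmul_add, hx, hy]
      | tmul p w => simp

include yd in
lemma δc_Lc (h : H) (x : V ⊗[K] H) : δc ρ (Lc act h x) =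
    TensorProduct.map₂ (LinearMap.mul K H) (Lc act) (comul h) (δc ρ x) := by
  induction x with
  | zero => simp
  | add x y hx hy => simp only [map_add, hx, hy]
  | tmul v k =>
    rw [δc_tmul, Lc_apply]
    -- `F a (b ⊗ c) = ρ(a·v) (b ⊗ c) Δ k`
    let F : H ⊗[K] (H ⊗[K] H) →ₗ[K] H ⊗[K] (V ⊗[K] H) :=
      TensorProduct.lift ((TensorProduct.map₂ (LinearMap.mul K H) (TensorProduct.mk K V H)).compl₁₂
        (ρ ∘ₗ (TensorProduct.curry act).flip v)
        ((LinearMap.mul K (H ⊗[K] H)).flip (comul k)))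
    -- `G (t ⊗ b) = t (1 ⊗ b) Δ k`
    let G : (H ⊗[K] V) ⊗[K] H →ₗ[K] H ⊗[K] (V ⊗[K] H) :=
      TensorProduct.lift ((TensorProduct.map₂ (LinearMap.mul K H) (TensorProduct.mk K V H)).compl₁₂
        LinearMap.id
        ((LinearMap.mul K (H ⊗[K] H)).flip (comul k) ∘ₗ TensorProduct.mk K H H 1))
    have f1 : ∀ t : H ⊗[K] H, δc ρ (TensorProduct.map₂ (TensorProduct.curry act)
        (LinearMap.mul K H) t (v ⊗ₜ k)) = F (comul.lTensor H t) := by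
      intro t
      induction t with
      | zero => simp
      | add x y hx hy => simp only [map_add, LinearMap.add_apply, hx, hy]
      | tmul a b => simp [F, δc_tmul]
    have f2 : ∀ t : H ⊗[K] H, F (TensorProduct.assoc K H H H (comul.rTensor H t)) =
        G (((TensorProduct.map₂ (LinearMap.mul K H) (TensorProduct.curry act)).flip (ρ v) ∘ₗ
          comul).rTensor H t) := by
      intro t
      induction t with
      | zero => simp
      | add x y hx hy => simp only [map_add, hx, hy]
      | tmul a b =>
        simp only [rTensor_tmul, LinearMap.comp_apply, LinearMap.flip_apply, yd' act ρ yd]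
        generalize (comul (R := K) a) = s
        induction s with
        | zero => simp
        | add x y hx hy => simp only [map_add, add_tmul, hx, hy]
        | tmul c d =>
          simp only [F, G, assoc_tmul, lift.tmul, LinearMap.comp_apply,
            LinearMap.compl₁₂_apply, LinearMap.flip_apply, curry_apply, LinearMap.id_apply,
            LinearMap.mul_apply', mk_apply]
          generalize ρ (act (c ⊗ₜ v)) = s
          generalize (comul (R := K) k) = u
          induction s with
          | zero => simp
          | add x y hx hy => simp only [map_add, LinearMap.add_apply, hx, hy]
          | tmul p w =>
            induction u with
            | zero => simp
            | add x y hx hy => simp only [map_add, mul_add, hx, hy]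
            | tmul q r => simp [mul_assoc]
    have f3 : ∀ t : H ⊗[K] H,
        TensorProduct.map₂ (LinearMap.mul K H) (Lc act) t
          (TensorProduct.map₂ (LinearMap.mul K H) (TensorProduct.mk K V H) (ρ v) (comul k)) =
        G (((TensorProduct.map₂ (LinearMap.mul K H) (TensorProduct.curry act)).flip (ρ v)
          ).rTensor H ((TensorProduct.assoc K H H H).symm (comul.lTensor H t))) := by
      intro t
      induction t with
      | zero => simp
      | add x y hx hy => simp only [map_add, LinearMap.add_apply, hx, hy]
      | tmul a b =>
        simp only [lTensor_tmul, G]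
        generalize ρ v = s
        generalize (comul (R := K) k) = u
        induction s with
        | zero => simp
        | add x y hx hy =>
          simp only [map_add, LinearMap.add_apply, rTensor_add, hx, hy]
        | tmul p w =>
          induction u with
          | zero =>
            generalize (rTensor H ((TensorProduct.map₂ (LinearMap.mul K H)
              (TensorProduct.curry act)).flip (p ⊗ₜ[K] w))) _ = z
            induction z with
            | zero => simp
            | add x y hx hy => rw [map_add, ← hx, ← hy]; simp
            | tmul p w => simp
          | add x y hx hy =>
            rw [map_add, map_add, hx, hy]
            generalize (rTensor H ((TensorProduct.map₂ (LinearMap.mul K H)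
              (TensorProduct.curry act)).flip (p ⊗ₜ[K] w))) _ = z
            induction z with
            | zero => simp
            | add x y hx hy => 
              simp only [map_add] at hx hy ⊢
              rw [← hx, ← hy]; abel
            | tmul p w => simp [mul_add]
          | tmul q r =>
            simp only [map₂_apply_tmul, TensorProduct.map_tmul, Lc_apply, mk_apply]
            generalize (comul (R := K) b) = z
            induction z with
            | zero => simp
            | add x y hx hy => simp only [map_add, tmul_add, LinearMap.add_apply, hx, hy]
            | tmul c d => simp [mul_assoc]
    rw [f1, ← Coalgebra.coassoc_apply, f2, f3, ← Coalgebra.coassoc_apply,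
      LinearEquiv.symm_apply_apply, LinearMap.rTensor_comp, LinearMap.comp_apply]

include yd coact_alg in
lemma δc_smash (x y : V ⊗[K] H) : δc ρ (smashMul K H V act (x ⊗ₜ y)) =
    TensorProduct.map₂ (LinearMap.mul K H) (TensorProduct.curry (smashMul K H V act))
      (δc ρ x) (δc ρ y) := by
  induction x with
  | zero => simp
  | add x y hx hy => simp only [map_add, add_tmul, LinearMap.add_apply, hx, hy]
  | tmul v k =>
    rw [smash_tmul]
    -- `δ(v z) = ρ(v) δ(z)`
    have e1 : ∀ z : V ⊗[K] H, δc ρ ((LinearMap.mul K V v).rTensor H z) =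
        TensorProduct.map₂ (LinearMap.mul K H)
          (LinearMap.rTensorHom H ∘ₗ LinearMap.mul K V) (ρ v) (δc ρ z) := by
      intro z
      induction z with
      | zero => simp
      | add x y hx hy => simp only [map_add, hx, hy]
      | tmul w l =>
        simp only [rTensor_tmul, δc_tmul, LinearMap.mul_apply', coact_alg]
        generalize ρ v = s
        generalize ρ w = t
        generalize (comul (R := K) l) = u
        induction s with
        | zero => simp
        | add x y hx hy => simp only [map_add, add_tmul, LinearMap.add_apply, hx, hy]
        | tmul p w =>
          induction t with
          | zero => simp
          | add x y hx hy => simp only [map_add, tmul_add, LinearMap.add_apply, hx, hy]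
          | tmul p' w' =>
            induction u with
            | zero => simp
            | add x y hx hy => simp only [map_add, hx, hy]
            | tmul q r => simp [mul_assoc]
    rw [e1, δc_Lc act ρ yd, δc_tmul]
    generalize ρ v = s
    generalize (comul (R := K) k) = t
    generalize δc ρ y = u
    induction s with
    | zero => simp
    | add x y hx hy => simp only [map_add, LinearMap.add_apply, hx, hy]
    | tmul p w =>
      induction t with
      | zero => simp
      | add x y hx hy => simp only [map_add, LinearMap.add_apply, hx, hy]
      | tmul p' w' =>
        induction u with
        | zero => simp
        | add x y hx hy => simp only [map_add, hx, hy]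
        | tmul q r => simp [mul_assoc, smash_tmul]

include counital in
lemma δc_counit (x : V ⊗[K] H) :
    TensorProduct.lid K (V ⊗[K] H) ((counit (R := K)).rTensor (V ⊗[K] H) (δc ρ x)) = x := by
  induction x with
  | zero => simp
  | add x y hx hy => simp only [map_add, hx, hy]
  | tmul v k =>
    have f : ∀ (s : H ⊗[K] V) (t : H ⊗[K] H),
        TensorProduct.lid K (V ⊗[K] H) ((counit (R := K)).rTensor (V ⊗[K] H)
          (TensorProduct.map₂ (LinearMap.mul K H) (TensorProduct.mk K V H) s t)) =
        (TensorProduct.lid K V ((counit (R := K)).rTensor V s)) ⊗ₜ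
          (TensorProduct.lid K H ((counit (R := K)).rTensor H t)) := by
      intro s t
      induction s with
      | zero => simp
      | add x y hx hy => simp only [map_add, add_tmul, LinearMap.add_apply, hx, hy]
      | tmul p w =>
        induction t with
        | zero => simp
        | add x y hx hy => simp only [map_add, tmul_add, hx, hy]
        | tmul q r => simp [TensorProduct.smul_tmul, TensorProduct.tmul_smul, smul_smul, mul_comm]
    rw [δc_tmul, f, counital]
    simp

include coassoc in
lemma δc_coassoc (x : V ⊗[K] H) : (δc ρ).lTensor H (δc ρ x) =
    TensorProduct.assoc K H H (V ⊗[K] H) (comul.rTensor (V ⊗[K] H) (δc ρ x)) := by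
  induction x with
  | zero => simp
  | add x y hx hy => simp only [map_add, hx, hy]
  | tmul v k =>
    rw [δc_tmul]
    let M := TensorProduct.map₂ (LinearMap.mul K H)
      (TensorProduct.map₂ (LinearMap.mul K H) (TensorProduct.mk K V H))
    have f1 : ∀ (s : H ⊗[K] V) (t : H ⊗[K] H), (δc ρ).lTensor H
        (TensorProduct.map₂ (LinearMap.mul K H) (TensorProduct.mk K V H) s t) =
        M (ρ.lTensor H s) (comul.lTensor H t) := by
      intro s t
      induction s with
      | zero => simp
      | add x y hx hy => simp only [map_add, LinearMap.add_apply, hx, hy]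
      | tmul p w =>
        induction t with
        | zero => simp
        | add x y hx hy => simp only [map_add, hx, hy]
        | tmul q r => simp [M, δc_tmul]
    have f2 : ∀ (s : H ⊗[K] V) (t : H ⊗[K] H),
        TensorProduct.assoc K H H (V ⊗[K] H) (comul.rTensor (V ⊗[K] H)
          (TensorProduct.map₂ (LinearMap.mul K H) (TensorProduct.mk K V H) s t)) =
        M (TensorProduct.assoc K H H V (comul.rTensor V s))
          (TensorProduct.assoc K H H H (comul.rTensor H t)) := by
      intro s t
      induction s with
      | zero => simp
      | add x y hx hy => simp only [map_add, LinearMap.add_apply, hx, hy]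
      | tmul p w =>
        induction t with
        | zero => simp
        | add x y hx hy => simp only [map_add, hx, hy]
        | tmul q r =>
          simp only [map₂_apply_tmul, TensorProduct.map_tmul, LinearMap.mul_apply', mk_apply,
            rTensor_tmul,
            Bialgebra.comul_mul]
          generalize (comul (R := K) p) = a
          generalize (comul (R := K) q) = b
          induction a with
          | zero => simp
          | add x y hx hy => simp only [map_add, add_tmul, add_mul, LinearMap.add_apply, hx, hy]
          | tmul p w =>
            induction b with
            | zero => simp
            | add x y hx hy => simp only [map_add, add_tmul, mul_add, hx, hy]
            | tmul q r => simp [M]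
    rw [f1, f2, coassoc, Coalgebra.coassoc_apply]

end Concrete
end SmashRB

theorem smashProduct_PL_isRotaBaxter_weight_neg_one
    (K : Type*) [Field K] [CharZero K]
    (H : Type*) [Ring H] [HopfAlgebra K H]
    (V : Type*) [NonUnitalRing V] [Module K V]
    [SMulCommClass K V V] [IsScalarTower K V V]
    -- left H-module structure on V
    (act : H ⊗[K] V →ₗ[K] V)
    (act_one : ∀ v : V, act ((1 : H) ⊗ₜ[K] v) = v)
    (act_mul : ∀ (h h' : H) (v : V),
      act (h ⊗ₜ[K] act (h' ⊗ₜ[K] v)) = act ((h * h') ⊗ₜ[K] v))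
    -- left H-comodule structure on V
    (ρ : V →ₗ[K] H ⊗[K] V)
    (coassoc : ∀ v : V,
      (ρ.lTensor H) (ρ v) =
        (TensorProduct.assoc K H H V)
          (((Coalgebra.comul (R := K) (A := H)).rTensor V) (ρ v)))
    (counital : ∀ v : V,
      (TensorProduct.lid K V) (((Coalgebra.counit (R := K) (A := H)).rTensor V) (ρ v)) = v)
    -- Yetter-Drinfeld condition:
    -- ∑ h₍₁₎v₍₋₁₎ ⊗ h₍₂₎·v₍₀₎ = ∑ (h₍₁₎·v)₍₋₁₎h₍₂₎ ⊗ (h₍₁₎·v)₍₀₎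
    (yd : ∀ (h : H) (v : V),
      (TensorProduct.map (LinearMap.mul' K H) act)
        ((TensorProduct.tensorTensorTensorComm K H H H V)
          (Coalgebra.comul h ⊗ₜ[K] ρ v)) =
      (TensorProduct.map
          ((LinearMap.mul' K H) ∘ₗ (TensorProduct.comm K H H).toLinearMap) LinearMap.id)
        ((TensorProduct.assoc K H H V).symm
          ((LinearMap.lTensor H (ρ ∘ₗ act))
            ((TensorProduct.assoc K H H V)
              ((LinearMap.rTensor V (TensorProduct.comm K H H).toLinearMap)
                (Coalgebra.comul h ⊗ₜ[K] v))))))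
    -- module-algebra condition: h·(vv') = ∑ (h₍₁₎·v)(h₍₂₎·v')
    (act_alg : ∀ (h : H) (v v' : V),
      act (h ⊗ₜ[K] (v * v')) =
        (LinearMap.mul' K V)
          ((TensorProduct.map act act)
            ((TensorProduct.tensorTensorTensorComm K H H V V)
              (Coalgebra.comul h ⊗ₜ[K] (v ⊗ₜ[K] v')))))
    -- comodule-algebra condition: ρ(vv') = ∑ v₍₋₁₎v'₍₋₁₎ ⊗ v₍₀₎v'₍₀₎
    (coact_alg : ∀ v v' : V,
      ρ (v * v') =
        (TensorProduct.map (LinearMap.mul' K H) (LinearMap.mul' K V))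
          ((TensorProduct.tensorTensorTensorComm K H V H V) (ρ v ⊗ₜ[K] ρ v')))
    :
    -- P_L(v # h) = ∑ S(v₍₋₁₎h₍₂₎)·v₍₀₎ # S(v₍₋₂₎h₍₁₎)h₍₃₎
    let PL : V ⊗[K] H →ₗ[K] V ⊗[K] H :=
      (LinearMap.lTensor V (LinearMap.mul' K H)) ∘ₗ
      (TensorProduct.leftComm K H V H).toLinearMap ∘ₗ
      (LinearMap.lTensor H
        ((LinearMap.rTensor H act) ∘ₗ (TensorProduct.assoc K H V H).symm.toLinearMap)) ∘ₗ
      (TensorProduct.map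
        (antipode (R := K) (A := H) ∘ₗ LinearMap.mul' K H)
        (LinearMap.rTensor (V ⊗[K] H)
          (antipode (R := K) (A := H) ∘ₗ LinearMap.mul' K H))) ∘ₗ
      (LinearMap.lTensor (H ⊗[K] H)
        (TensorProduct.tensorTensorTensorComm K H V H H).toLinearMap) ∘ₗ
      (TensorProduct.tensorTensorTensorComm K H (H ⊗[K] V) H (H ⊗[K] H)).toLinearMap ∘ₗ
      (TensorProduct.map
        ((LinearMap.lTensor H ρ) ∘ₗ ρ)
        ((LinearMap.lTensor H (Coalgebra.comul (R := K) (A := H))) ∘ₗ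
          Coalgebra.comul))
    (PL ∘ₗ PL = PL) ∧
    (∀ x y : V ⊗[K] H,
      smashMul K H V act (PL x ⊗ₜ[K] PL y) =
        PL (smashMul K H V act (x ⊗ₜ[K] PL y)) +
        PL (smashMul K H V act (PL x ⊗ₜ[K] y)) +
        (-1 : K) • PL (smashMul K H V act (x ⊗ₜ[K] y))) := by
  intro PL
  have hPL : PL = SmashRB.PA (SmashRB.Lc act) (SmashRB.δc ρ) := by
    ext v h
    have f : ∀ (s : H ⊗[K] V) (t : H ⊗[K] H),
        (LinearMap.lTensor V (LinearMap.mul' K H))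
        ((TensorProduct.leftComm K H V H)
        ((LinearMap.lTensor H
          ((LinearMap.rTensor H act) ∘ₗ (TensorProduct.assoc K H V H).symm.toLinearMap))
        ((TensorProduct.map
          (antipode (R := K) (A := H) ∘ₗ LinearMap.mul' K H)
          (LinearMap.rTensor (V ⊗[K] H)
            (antipode (R := K) (A := H) ∘ₗ LinearMap.mul' K H)))
        ((LinearMap.lTensor (H ⊗[K] H)
          (TensorProduct.tensorTensorTensorComm K H V H H).toLinearMap)
        ((TensorProduct.tensorTensorTensorComm K H (H ⊗[K] V) H (H ⊗[K] H))
          ((TensorProduct.assoc K H H V (comul.rTensor V s)) ⊗ₜ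
            (TensorProduct.assoc K H H H (comul.rTensor H t)))))))) =
        TensorProduct.lift (SmashRB.Lc act ∘ₗ antipode K)
          (TensorProduct.map₂ (LinearMap.mul K H) (TensorProduct.mk K V H) s t) := by
      intro s t
      induction s with
      | zero => simp
      | add x y hx hy => simp only [map_add, add_tmul, LinearMap.add_apply, hx, hy]
      | tmul p w =>
        induction t with
        | zero => simp
        | add x y hx hy => simp only [map_add, tmul_add, hx, hy]
        | tmul q r =>
          simp only [map₂_apply_tmul, TensorProduct.map_tmul, LinearMap.mul_apply', mk_apply,
            rTensor_tmul, lift.tmul, LinearMap.comp_apply, SmashRB.Lc_apply,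
            SmashRB.comul_antipode, Bialgebra.comul_mul]
          generalize (comul (R := K) p) = a
          generalize (comul (R := K) q) = b
          induction a with
          | zero => simp
          | add x y hx hy => simp only [map_add, add_tmul, add_mul, LinearMap.add_apply, hx, hy]
          | tmul c d =>
            induction b with
            | zero => simp
            | add x y hx hy =>
              simp only [map_add, add_tmul, tmul_add, mul_add, LinearMap.add_apply, hx, hy]
            | tmul e g => simp
    have f' := f (ρ v) (comul h)
    rw [← coassoc, Coalgebra.coassoc_apply] at f'
    simp only [AlgebraTensorModule.curry_apply, curry_apply, LinearMap.coe_restrictScalars,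
      SmashRB.PA, LinearMap.comp_apply, SmashRB.δc_tmul]
    rw [← f']
    rfl
  have L_one := SmashRB.Lc_one act act_one
  have L_mul := SmashRB.Lc_mul act act_mul
  have δ_L := SmashRB.δc_Lc act ρ yd
  have δ_counit := SmashRB.δc_counit ρ counital
  rw [hPL]
  refine ⟨LinearMap.ext fun x => SmashRB.PA_PA _ _ L_mul L_one δ_L δ_counit x, fun x y => ?_⟩
  exact SmashRB.PA_RB (SmashRB.Lc act) (SmashRB.δc ρ)
    (TensorProduct.curry (smashMul K H V act)) L_mul L_one
    (SmashRB.Lc_smash act act_mul act_alg) δ_L (SmashRB.δc_smash act ρ yd coact_alg)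
    (SmashRB.δc_coassoc ρ coassoc) δ_counit x y
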